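/- Let s > 2, let I ⊆ ℝ be an open interval containing 0, and let S be the kernel S(k,ℓ) = Λ(k,ℓ)/|kℓ(k+ℓ)|^{1/2} if kℓ(k+ℓ) ≠ 0 and 0 otherwise, with Λ(k,ℓ) = 2|k+ℓ|·|k|·|ℓ|/(|k+ℓ|+|k|+|ℓ|) for (k,ℓ)≠(0,0) and Λ(0,0)=0. Suppose f: I×ℝ → ℂ is measurable, f(τ,−k) = conj(f(τ,k)) for a.e. k and all τ ∈ I, the map τ ↦ f(τ,·) is continuous from I into L²(ℝ,(1+|k|^{2s})dk) with sup_{τ∈I} ∫_ℝ (1+|k|^{2s})|f(τ,k)|² dk < ∞, and for a.e. k ∈ ℝ and all τ ∈ I the Duhamel relation f(τ,k) = f(0,k) − i k ∫₀^τ ∫_ℝ S(k−ℓ,ℓ) f(σ,k−ℓ) f(σ,ℓ) dℓ dσ holds. Then the L² norm is conserved: ∫_ℝ |f(τ,k)|² dk = ∫_ℝ |f(0,k)|² dk for all τ ∈ I. -/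

import Mathlib

/-!
The energy identity reduces conservation to the vanishing of the trilinear form
`J = ∫∫ k * H(k, l)` with `H(k, l) = conj (u k) * K(k - l, l) * u (k - l) * u l`. Symmetry of the
kernel on resonant triads and reality of the wave give `H(l, k) = conj (H(k, l))` and
`H(k, k - l) = H(k, l)`. Splitting the weight as `k = l + (k - l)`, each half contributes `conj J`,
so `J = 2 * conj J` and `J = 0`. Since `|k| * |K(k - l, l)| ≤ C * √(|k| * |l| * |k - l|)`, all the
integrals converge absolutely as soon as `√|k| * |u k|` is in `L¹ ∩ L²`. The equation being given
pointwise in `k`, the energy identity is the fundamental theorem of calculus for `|f(τ, k)|²` at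
each `k`, integrated over `k` by Fubini.
-/

open MeasureTheory

/-- The kernel `Λ` of the surface-wave amplitude equation. -/
noncomputable def Lam (k l : ℝ) : ℝ :=
  if (k, l) = ((0 : ℝ), (0 : ℝ)) then 0
  else 2 * |k + l| * |k| * |l| / (|k + l| + |k| + |l|)

/-- The kernel `S` of the noncanonical form of the amplitude equation. -/
noncomputable def Sker (k l : ℝ) : ℝ :=
  if k * l * (k + l) ≠ 0 then Lam k l / Real.sqrt |k * l * (k + l)| else 0

section EnergyIdentity

open Set
open scoped RealInnerProductSpace

lemma absolutelyContinuousOnInterval_of_dist_le {X Y : Type*} [PseudoMetricSpace X]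
    [PseudoMetricSpace Y] {f : ℝ → X} {g : ℝ → Y} {a b : ℝ}
    (hg : AbsolutelyContinuousOnInterval g a b)
    (hfg : ∀ x ∈ uIcc a b, ∀ y ∈ uIcc a b, dist (f x) (f y) ≤ dist (g x) (g y)) :
    AbsolutelyContinuousOnInterval f a b := by
  refine squeeze_zero' (.of_forall fun _ ↦ Finset.sum_nonneg fun _ _ ↦ dist_nonneg) ?_ hg
  rw [Filter.eventually_inf_principal]
  exact .of_forall fun J hJ ↦ Finset.sum_le_sum fun i hi ↦
    hfg _ (hJ.1 i hi).1 _ (hJ.1 i hi).2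

variable {E : Type*} [NormedAddCommGroup E]

lemma absolutelyContinuousOnInterval_norm_add_integral [NormedSpace ℝ E] {h : ℝ → E} {a b : ℝ}
    (hh : IntervalIntegrable h volume a b) (c : E) :
    AbsolutelyContinuousOnInterval (fun x ↦ ‖c + ∫ t in a..x, h t‖) a b := by
  refine absolutelyContinuousOnInterval_of_dist_le
    (hh.norm.absolutelyContinuousOnInterval_intervalIntegral left_mem_uIcc) fun x hx y hy ↦ ?_
  have sub_mem : ∀ z ∈ uIcc a b, IntervalIntegrable h volume a z := fun z hz ↦
    hh.mono_set (uIcc_subset_uIcc left_mem_uIcc hz)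
  calc dist ‖c + ∫ t in a..x, h t‖ ‖c + ∫ t in a..y, h t‖
      ≤ ‖(∫ t in a..x, h t) - ∫ t in a..y, h t‖ := by
        simpa only [Real.dist_eq, add_sub_add_left_eq_sub] using
          abs_norm_sub_norm_le (c + ∫ t in a..x, h t) (c + ∫ t in a..y, h t)
    _ = ‖∫ t in y..x, h t‖ := by
        rw [intervalIntegral.integral_interval_sub_left (sub_mem x hx) (sub_mem y hy)]
    _ ≤ |∫ t in y..x, ‖h t‖| := intervalIntegral.norm_integral_le_abs_integral_norm
    _ = dist (∫ t in a..x, ‖h t‖) (∫ t in a..y, ‖h t‖) := by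
        rw [Real.dist_eq, intervalIntegral.integral_interval_sub_left (sub_mem x hx).norm
          (sub_mem y hy).norm]

variable [InnerProductSpace ℝ E] [CompleteSpace E]

lemma two_mul_integral_inner_add_integral {h : ℝ → E} {a b : ℝ}
    (hh : IntervalIntegrable h volume a b) (c : E) :
    2 * ∫ x in a..b, ⟪c + ∫ t in a..x, h t, h x⟫ = ‖c + ∫ t in a..b, h t‖ ^ 2 - ‖c‖ ^ 2 := by
  have norm_ac := absolutelyContinuousOnInterval_norm_add_integral hh c
  have ftc := (norm_ac.fun_mul norm_ac).integral_deriv_eq_sub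
  simp only [← sq, intervalIntegral.integral_same, add_zero] at ftc
  rw [← ftc, ← intervalIntegral.integral_const_mul]
  refine intervalIntegral.integral_congr_ae ?_
  filter_upwards [hh.ae_hasDerivAt_integral] with x hx hxab
  exact ((hx (uIoc_subset_uIcc hxab) a left_mem_uIcc).const_add c).norm_sq.deriv.symm

theorem integral_norm_sq_sub_integral_norm_sq {α : Type*} [MeasurableSpace α] {μ : Measure α}
    [SFinite μ] {f g : ℝ → α → E} {a b : ℝ}
    (hf : ∀ᵐ x ∂μ, ∀ t ∈ uIcc a b, f t x = f a x + ∫ r in a..t, g r x)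
    (hg : ∀ᵐ x ∂μ, IntervalIntegrable (fun t ↦ g t x) volume a b)
    (hfa : Integrable (fun x ↦ ‖f a x‖ ^ 2) μ) (hfb : Integrable (fun x ↦ ‖f b x‖ ^ 2) μ)
    (hfg : Integrable (fun p : ℝ × α ↦ ⟪f p.1 p.2, g p.1 p.2⟫)
      ((volume.restrict (uIoc a b)).prod μ)) :
    (∫ x, ‖f b x‖ ^ 2 ∂μ) - ∫ x, ‖f a x‖ ^ 2 ∂μ
      = 2 * ∫ t in a..b, ∫ x, ⟪f t x, g t x⟫ ∂μ := by
  have pointwise : ∀ᵐ x ∂μ, ‖f b x‖ ^ 2 - ‖f a x‖ ^ 2 = 2 * ∫ t in a..b, ⟪f t x, g t x⟫ := by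
    filter_upwards [hf, hg] with x hfx hgx
    rw [hfx b right_mem_uIcc, ← two_mul_integral_inner_add_integral hgx (f a x)]
    congr 1
    refine intervalIntegral.integral_congr fun t ht ↦ ?_
    simp only [← hfx t ht]
  rw [← integral_sub hfb hfa, integral_congr_ae pointwise, integral_const_mul]
  simp only [intervalIntegral.intervalIntegral_eq_integral_uIoc, integral_smul]
  rw [integral_integral_swap (f := fun t x ↦ ⟪f t x, g t x⟫) hfg]

end EnergyIdentity

section Integrability

lemma integrable_prod_of_integral_norm_le {α β F : Type*} [MeasurableSpace α] [MeasurableSpace β]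
    [NormedAddCommGroup F] {μ : Measure α} {ν : Measure β} [SFinite ν]
    {f : α × β → F} {g : α → ℝ} (hf : AEStronglyMeasurable f (μ.prod ν))
    (hfx : ∀ᵐ x ∂μ, Integrable (fun y ↦ f (x, y)) ν) (hg : Integrable g μ)
    (hfg : ∀ᵐ x ∂μ, ∫ y, ‖f (x, y)‖ ∂ν ≤ g x) : Integrable f (μ.prod ν) := by
  refine (integrable_prod_iff hf).2 ⟨hfx, hg.mono' hf.norm.integral_prod_right' ?_⟩
  filter_upwards [hfg] with x hx
  rwa [Real.norm_of_nonneg (integral_nonneg fun _ ↦ norm_nonneg _)]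

variable {G : Type*} [AddCommGroup G] [MeasurableSpace G] [MeasurableAdd G] [MeasurableNeg G]
  {μ : Measure G} [μ.IsAddLeftInvariant] [μ.IsNegInvariant] {w : G → ℝ}

lemma integrable_sub_left_mul_self (hw : MemLp w 2 μ) (x : G) :
    Integrable (fun y ↦ w (x - y) * w y) μ :=
  (hw.comp_measurePreserving (μ.measurePreserving_sub_left x)).integrable_mul hw

lemma integral_sub_left_mul_self_le (hw : MemLp w 2 μ) (x : G) :
    ∫ y, w (x - y) * w y ∂μ ≤ ∫ y, w y ^ 2 ∂μ := by
  have sq_int : Integrable (fun y ↦ w y ^ 2) μ := hw.integrable_sq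
  have sq_int_sub : Integrable (fun y ↦ w (x - y) ^ 2) μ := sq_int.comp_sub_left x
  calc ∫ y, w (x - y) * w y ∂μ
      ≤ ∫ y, (w (x - y) ^ 2 + w y ^ 2) / 2 ∂μ :=
        integral_mono (integrable_sub_left_mul_self hw x) ((sq_int_sub.add sq_int).div_const 2)
          fun y ↦ by linarith [two_mul_le_add_sq (w (x - y)) (w y)]
    _ = ∫ y, w y ^ 2 ∂μ := by
        rw [integral_div, integral_add sq_int_sub sq_int,
          integral_sub_left_eq_self (fun y ↦ w y ^ 2) μ x, add_self_div_two]

end Integrability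

section Weights

lemma rpow_le_one_add_rpow {x p q : ℝ} (hx : 0 ≤ x) (hp : 0 ≤ p) (hpq : p ≤ q) :
    x ^ p ≤ 1 + x ^ q := by
  rcases le_total x 1 with h | h
  · exact (Real.rpow_le_one hx h hp).trans (le_add_of_nonneg_right (Real.rpow_nonneg hx q))
  · exact (Real.rpow_le_rpow_of_exponent_le h hpq).trans (le_add_of_nonneg_left zero_le_one)

lemma integrable_abs_div_one_add_abs_rpow {q : ℝ} (hq : 2 < q) :
    Integrable (fun k : ℝ ↦ |k| / (1 + |k| ^ q)) := by
  have japanese : Integrable (fun k : ℝ ↦ 2 ^ (q - 1) * (1 + |k|) ^ (-(q - 1))) :=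
    (integrable_one_add_norm (by rw [Module.finrank_self, Nat.cast_one]; linarith)).const_mul _
  refine japanese.mono' (Measurable.aestronglyMeasurable (by fun_prop)) (.of_forall fun k ↦ ?_)
  have convexity : (1 + |k|) ^ q ≤ 2 ^ (q - 1) * (1 + |k| ^ q) := by
    have := NNReal.rpow_add_le_mul_rpow_add_rpow 1 ‖k‖₊ (p := q) (by linarith)
    rw [NNReal.one_rpow] at this
    exact_mod_cast this
  rw [Real.norm_of_nonneg (by positivity), div_le_iff₀ (by positivity)]
  calc |k| ≤ 1 + |k| := by linarith
    _ = (1 + |k|) ^ (-(q - 1)) * (1 + |k|) ^ q := by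
      rw [← Real.rpow_add (by positivity), neg_sub, sub_add_cancel, Real.rpow_one]
    _ ≤ (1 + |k|) ^ (-(q - 1)) * (2 ^ (q - 1) * (1 + |k| ^ q)) := by gcongr
    _ = 2 ^ (q - 1) * (1 + |k|) ^ (-(q - 1)) * (1 + |k| ^ q) := by ring

end Weights

section Triads

open scoped ComplexConjugate RealInnerProductSpace

lemma integral_comp_fst_sub {F : Type*} [NormedAddCommGroup F] [NormedSpace ℝ F] (f : ℝ × ℝ → F) :
    ∫ p : ℝ × ℝ, f (p.1, p.1 - p.2) = ∫ p, f p := by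
  have mp : MeasurePreserving (fun p : ℝ × ℝ ↦ (p.1, p.1 - p.2)) :=
    (MeasurePreserving.id volume).skew_product (g := fun k l ↦ k - l) (by fun_prop)
      (.of_forall fun k ↦ (volume.measurePreserving_sub_left k).map_eq)
  have involutive : Function.Involutive fun p : ℝ × ℝ ↦ (p.1, p.1 - p.2) := fun p ↦ by simp
  exact mp.integral_comp
    (MeasurableEquiv.ofInvolutive _ involutive mp.measurable).measurableEmbedding f

theorem integral_fst_mul_eq_zero {𝕜 : Type*} [RCLike 𝕜] {H : ℝ × ℝ → 𝕜}
    (hswap : ∀ᵐ p, H p.swap = conj (H p)) (hrefl : ∀ᵐ p : ℝ × ℝ, H (p.1, p.1 - p.2) = H p)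
    (hint : Integrable fun p : ℝ × ℝ ↦ (p.1 : 𝕜) * H p) :
    ∫ p : ℝ × ℝ, (p.1 : 𝕜) * H p = 0 := by
  have conj_swap : (fun p : ℝ × ℝ ↦ conj ((p.1 : 𝕜) * H p)) ∘ Prod.swap
      =ᵐ[volume] fun p ↦ (p.2 : 𝕜) * H p := by
    filter_upwards [hswap] with p hp
    simp [hp]
  have hint_conj : Integrable fun p : ℝ × ℝ ↦ conj ((p.1 : 𝕜) * H p) :=
    (RCLike.conjCLE (K := 𝕜) : 𝕜 →L[ℝ] 𝕜).integrable_comp hint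
  have hint_snd : Integrable fun p : ℝ × ℝ ↦ (p.2 : 𝕜) * H p :=
    hint_conj.swap.congr conj_swap
  have snd_eq : ∫ p : ℝ × ℝ, (p.2 : 𝕜) * H p = conj (∫ p : ℝ × ℝ, (p.1 : 𝕜) * H p) := by
    rw [← integral_congr_ae conj_swap, ← integral_conj]
    exact integral_prod_swap fun p : ℝ × ℝ ↦ conj ((p.1 : 𝕜) * H p)
  have fst_sub_snd : ∫ p : ℝ × ℝ, ((p.1 : 𝕜) * H p - (p.2 : 𝕜) * H p)
      = ∫ p : ℝ × ℝ, (p.2 : 𝕜) * H p := by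
    rw [← integral_comp_fst_sub fun p ↦ (p.2 : 𝕜) * H p]
    refine integral_congr_ae ?_
    filter_upwards [hrefl] with p hp
    simp only [hp, RCLike.ofReal_sub, sub_mul]
  rw [integral_sub hint hint_snd, sub_eq_iff_eq_add, snd_eq, ← two_mul] at fst_sub_snd
  have norm_eq := congrArg norm fst_sub_snd
  rw [norm_mul, RCLike.norm_conj, RCLike.norm_ofNat] at norm_eq
  exact norm_eq_zero.1 (by linarith)

/-- `K k l` is the interaction coefficient of the resonant triad `k + l + m = 0`: by `symm` and
`resonant` it is a symmetric function of the triad, up to an overall change of sign of `(k, l, m)`,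
and by `bound` the derivative in the equation costs half a derivative on each of the three waves. -/
structure IsTriadKernel (K : ℝ → ℝ → ℝ) (C : ℝ) : Prop where
  measurable : Measurable (Function.uncurry K)
  symm : ∀ k l, K l k = K k l
  resonant : ∀ k l, K (-k) (k + l) = K k l
  bound : ∀ k l, |k + l| * |K k l| ≤ C * √(|k| * |l| * |k + l|)

/-- The Fourier transform of `a(ψ, ψ)`, where `u = ψ̂` and `a` is the bilinear form with
multiplier `K`. -/
noncomputable def triadConvolution (K : ℝ → ℝ → ℝ) (u : ℝ → ℂ) (k : ℝ) : ℂ :=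
  ∫ l, ((K (k - l) l : ℝ) : ℂ) * u (k - l) * u l

/-- The Fourier transform of `-∂_θ a(ψ, ψ)`, the velocity field of the amplitude equation. -/
noncomputable def triadField (K : ℝ → ℝ → ℝ) (u : ℝ → ℂ) (k : ℝ) : ℂ :=
  -(Complex.I * k * triadConvolution K u k)

/-- The integrand of the trilinear form obtained by pairing `u` with `triadConvolution K u`. -/
noncomputable def triadDensity (K : ℝ → ℝ → ℝ) (u : ℝ → ℂ) (p : ℝ × ℝ) : ℂ :=
  conj (u p.1) * (((K (p.1 - p.2) p.2 : ℝ) : ℂ) * u (p.1 - p.2) * u p.2)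

/-- The modulus of the Fourier transform of `|∂_θ|^(1/2) ψ`, where `u = ψ̂`. -/
noncomputable def halfDerivAmplitude (u : ℝ → ℂ) (k : ℝ) : ℝ := √|k| * ‖u k‖

variable {K : ℝ → ℝ → ℝ} {C : ℝ} {u : ℝ → ℂ}

lemma halfDerivAmplitude_nonneg (u : ℝ → ℂ) (k : ℝ) : 0 ≤ halfDerivAmplitude u k := by
  unfold halfDerivAmplitude; positivity

lemma halfDerivAmplitude_sq (u : ℝ → ℂ) (k : ℝ) :
    halfDerivAmplitude u k ^ 2 = |k| * ‖u k‖ ^ 2 := by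
  rw [halfDerivAmplitude, mul_pow, Real.sq_sqrt (abs_nonneg k)]

lemma measurable_halfDerivAmplitude (hu : Measurable u) : Measurable (halfDerivAmplitude u) := by
  unfold halfDerivAmplitude; fun_prop

namespace IsTriadKernel

lemma nonneg (hK : IsTriadKernel K C) : 0 ≤ C := by
  have : 0 ≤ C * √(|1| * |1| * |1 + 1|) := 
    (mul_nonneg (abs_nonneg _) (abs_nonneg _)).trans (hK.bound 1 1)
  exact nonneg_of_mul_nonneg_left this (by norm_num)

lemma measurable_sub_left (hK : IsTriadKernel K C) :
    Measurable fun p : ℝ × ℝ ↦ K (p.1 - p.2) p.2 :=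
  hK.measurable.comp (by fun_prop : Measurable fun p : ℝ × ℝ ↦ (p.1 - p.2, p.2))

lemma measurable_triadConvolution (hK : IsTriadKernel K C) {α : Type*} [MeasurableSpace α]
    {f : α → ℝ → ℂ} (hf : Measurable (Function.uncurry f)) :
    Measurable fun p : α × ℝ ↦ triadConvolution K (f p.1) p.2 := by
  have kernel_meas : Measurable fun q : (α × ℝ) × ℝ ↦ K (q.1.2 - q.2) q.2 :=
    hK.measurable_sub_left.comp (by fun_prop : Measurable fun q : (α × ℝ) × ℝ ↦ (q.1.2, q.2))
  have diff_meas : Measurable fun q : (α × ℝ) × ℝ ↦ f q.1.1 (q.1.2 - q.2) :=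
    hf.comp (by fun_prop : Measurable fun q : (α × ℝ) × ℝ ↦ (q.1.1, q.1.2 - q.2))
  have wave_meas : Measurable fun q : (α × ℝ) × ℝ ↦ f q.1.1 q.2 :=
    hf.comp (by fun_prop : Measurable fun q : (α × ℝ) × ℝ ↦ (q.1.1, q.2))
  exact (StronglyMeasurable.integral_prod_right'
    (((Complex.measurable_ofReal.comp kernel_meas).mul diff_meas).mul
      wave_meas).stronglyMeasurable).measurable

lemma measurable_triadField (hK : IsTriadKernel K C) {α : Type*} [MeasurableSpace α]
    {f : α → ℝ → ℂ} (hf : Measurable (Function.uncurry f)) :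
    Measurable fun p : α × ℝ ↦ triadField K (f p.1) p.2 := by
  have := hK.measurable_triadConvolution hf
  unfold triadField
  fun_prop

lemma measurable_triadDensity (hK : IsTriadKernel K C) (hu : Measurable u) :
    Measurable (triadDensity K u) :=
  (Complex.continuous_conj.measurable.comp (hu.comp measurable_fst)).mul
    (((Complex.measurable_ofReal.comp hK.measurable_sub_left).mul
      (hu.comp (measurable_fst.sub measurable_snd))).mul (hu.comp measurable_snd))

lemma triadDensity_swap (hK : IsTriadKernel K C) (hreal : ∀ᵐ k, u (-k) = conj (u k)) :
    ∀ᵐ p, triadDensity K u p.swap = conj (triadDensity K u p) := by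
  have real_sub : ∀ᵐ p : ℝ × ℝ, u (-(p.1 - p.2)) = conj (u (p.1 - p.2)) :=
    (quasiMeasurePreserving_sub_of_right_invariant volume volume).ae hreal
  filter_upwards [real_sub] with ⟨k, l⟩ hkl
  have kernel_swap : K (l - k) k = K (k - l) l := by simpa using hK.resonant (k - l) l
  simp only [neg_sub] at hkl
  simp only [triadDensity, Prod.swap, map_mul, Complex.conj_conj, Complex.conj_ofReal, hkl,
    kernel_swap]
  ring

lemma triadDensity_fst_sub (hK : IsTriadKernel K C) (u : ℝ → ℂ) (p : ℝ × ℝ) :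
    triadDensity K u (p.1, p.1 - p.2) = triadDensity K u p := by
  simp only [triadDensity, sub_sub_cancel, hK.symm (p.1 - p.2) p.2]
  ring

lemma abs_mul_norm_integrand_le (hK : IsTriadKernel K C) (u : ℝ → ℂ) (k l : ℝ) :
    |k| * ‖((K (k - l) l : ℝ) : ℂ) * u (k - l) * u l‖
      ≤ C * √|k| * (halfDerivAmplitude u (k - l) * halfDerivAmplitude u l) := by
  have kernel_le : |k| * |K (k - l) l| ≤ C * (√|k - l| * √|l| * √|k|) := by
    simpa only [sub_add_cancel, Real.sqrt_mul, abs_nonneg, mul_nonneg] using hK.bound (k - l) l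
  calc |k| * ‖((K (k - l) l : ℝ) : ℂ) * u (k - l) * u l‖
      = |k| * |K (k - l) l| * (‖u (k - l)‖ * ‖u l‖) := by
        rw [norm_mul, norm_mul, Complex.norm_real, Real.norm_eq_abs]; ring
    _ ≤ C * (√|k - l| * √|l| * √|k|) * (‖u (k - l)‖ * ‖u l‖) := by gcongr
    _ = C * √|k| * (halfDerivAmplitude u (k - l) * halfDerivAmplitude u l) := by
        unfold halfDerivAmplitude; ring

lemma norm_triadField_le (hK : IsTriadKernel K C) (hu : MemLp (halfDerivAmplitude u) 2) (k : ℝ) :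
    ‖triadField K u k‖ ≤ C * √|k| * ∫ l, halfDerivAmplitude u l ^ 2 := by
  have field_eq : triadField K u k =
      ∫ l, -(Complex.I * k * (((K (k - l) l : ℝ) : ℂ) * u (k - l) * u l)) := by
    rw [triadField, triadConvolution, integral_neg, integral_const_mul]
  rw [field_eq]
  calc _ ≤ ∫ l, C * √|k| * (halfDerivAmplitude u (k - l) * halfDerivAmplitude u l) := by
        refine norm_integral_le_of_norm_le ((integrable_sub_left_mul_self hu k).const_mul _)
          (.of_forall fun l ↦ ?_)
        rw [norm_neg, norm_mul, norm_mul, Complex.norm_I, one_mul, Complex.norm_real]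
        exact hK.abs_mul_norm_integrand_le u k l
    _ ≤ C * √|k| * ∫ l, halfDerivAmplitude u l ^ 2 := by
        rw [integral_const_mul]
        exact mul_le_mul_of_nonneg_left (integral_sub_left_mul_self_le hu k)
          (mul_nonneg hK.nonneg (Real.sqrt_nonneg _))

lemma norm_inner_triadField_le (hK : IsTriadKernel K C) (hu : MemLp (halfDerivAmplitude u) 2)
    (k : ℝ) :
    ‖⟪u k, triadField K u k⟫‖ ≤ C * (∫ l, halfDerivAmplitude u l ^ 2) * halfDerivAmplitude u k := by
  calc ‖⟪u k, triadField K u k⟫‖ ≤ ‖u k‖ * ‖triadField K u k‖ := norm_inner_le_norm _ _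
    _ ≤ ‖u k‖ * (C * √|k| * ∫ l, halfDerivAmplitude u l ^ 2) := by
        exact mul_le_mul_of_nonneg_left (hK.norm_triadField_le hu k) (norm_nonneg _)
    _ = C * (∫ l, halfDerivAmplitude u l ^ 2) * halfDerivAmplitude u k := by
        unfold halfDerivAmplitude; ring

lemma norm_fst_mul_triadDensity_le (hK : IsTriadKernel K C) (u : ℝ → ℂ) (k l : ℝ) :
    ‖(k : ℂ) * triadDensity K u (k, l)‖
      ≤ C * halfDerivAmplitude u k * (halfDerivAmplitude u (k - l) * halfDerivAmplitude u l) := by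
  calc ‖(k : ℂ) * triadDensity K u (k, l)‖
      = ‖u k‖ * (|k| * ‖((K (k - l) l : ℝ) : ℂ) * u (k - l) * u l‖) := by
        rw [triadDensity, norm_mul, norm_mul, RCLike.norm_conj, Complex.norm_real,
          Real.norm_eq_abs, mul_left_comm]
    _ ≤ ‖u k‖ * (C * √|k| * (halfDerivAmplitude u (k - l) * halfDerivAmplitude u l)) := by
        exact mul_le_mul_of_nonneg_left (hK.abs_mul_norm_integrand_le u k l) (norm_nonneg _)
    _ = C * halfDerivAmplitude u k * (halfDerivAmplitude u (k - l) * halfDerivAmplitude u l) := by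
        simp only [halfDerivAmplitude]; ring

lemma integrable_fst_mul_triadDensity (hK : IsTriadKernel K C) (hu : Measurable u)
    (hu₁ : Integrable (halfDerivAmplitude u)) (hu₂ : MemLp (halfDerivAmplitude u) 2) :
    Integrable fun p : ℝ × ℝ ↦ (p.1 : ℂ) * triadDensity K u p := by
  have meas : Measurable fun p : ℝ × ℝ ↦ (p.1 : ℂ) * triadDensity K u p :=
    (Complex.measurable_ofReal.comp measurable_fst).mul (hK.measurable_triadDensity hu)
  have dominating (k : ℝ) := (integrable_sub_left_mul_self hu₂ k).const_mul
    (C * halfDerivAmplitude u k)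
  have section_int (k : ℝ) : Integrable fun l ↦ (k : ℂ) * triadDensity K u (k, l) :=
    (dominating k).mono' (meas.comp measurable_prodMk_left).aestronglyMeasurable
      (.of_forall (hK.norm_fst_mul_triadDensity_le u k))
  refine integrable_prod_of_integral_norm_le meas.aestronglyMeasurable (.of_forall section_int)
    ((hu₁.const_mul C).mul_const (∫ l, halfDerivAmplitude u l ^ 2)) (.of_forall fun k ↦ ?_)
  calc ∫ l, ‖(k : ℂ) * triadDensity K u (k, l)‖
      ≤ ∫ l, C * halfDerivAmplitude u k *
          (halfDerivAmplitude u (k - l) * halfDerivAmplitude u l) :=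
        integral_mono (section_int k).norm (dominating k) (hK.norm_fst_mul_triadDensity_le u k)
    _ ≤ C * halfDerivAmplitude u k * ∫ l, halfDerivAmplitude u l ^ 2 := by
        rw [integral_const_mul]
        exact mul_le_mul_of_nonneg_left (integral_sub_left_mul_self_le hu₂ k)
          (mul_nonneg hK.nonneg (halfDerivAmplitude_nonneg u k))

theorem integral_inner_triadField_eq_zero (hK : IsTriadKernel K C) (hu : Measurable u)
    (hreal : ∀ᵐ k, u (-k) = conj (u k)) (hu₁ : Integrable (halfDerivAmplitude u))
    (hu₂ : MemLp (halfDerivAmplitude u) 2) :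
    ∫ k, ⟪u k, triadField K u k⟫ = 0 := by
  have density_int := hK.integrable_fst_mul_triadDensity hu hu₁ hu₂
  have inner_eq (k : ℝ) : ⟪u k, triadField K u k⟫ =
      (∫ l, (k : ℂ) * triadDensity K u (k, l)).im := by
    have velocity_eq : conj (u k) * triadField K u k
        = -(Complex.I * (k * (conj (u k) * triadConvolution K u k))) := by
      rw [triadField]; ring
    rw [Complex.inner, mul_comm, velocity_eq, Complex.neg_re, Complex.I_mul_re, neg_neg,
      triadConvolution]
    simp only [triadDensity, integral_const_mul]
  calc ∫ k, ⟪u k, triadField K u k⟫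
      = (∫ k : ℝ, ∫ l, (k : ℂ) * triadDensity K u (k, l)).im := by
        simp only [inner_eq]
        exact integral_im density_int.integral_prod_left
    _ = (∫ p : ℝ × ℝ, (p.1 : ℂ) * triadDensity K u p).im := by
        rw [← integral_prod _ density_int]; rfl
    _ = 0 := by
        have cancel := integral_fst_mul_eq_zero (hK.triadDensity_swap hreal)
          (.of_forall (hK.triadDensity_fst_sub u)) density_int
        simpa using congrArg Complex.im cancel

section Evolution

open Set

variable {f : ℝ → ℝ → ℂ} {a b B₁ B₂ : ℝ}

lemma intervalIntegrable_triadField (hK : IsTriadKernel K C) (hf : Measurable (Function.uncurry f))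
    (hf₂ : ∀ t ∈ uIcc a b, MemLp (halfDerivAmplitude (f t)) 2)
    (hB₂ : ∀ t ∈ uIcc a b, ∫ k, halfDerivAmplitude (f t) k ^ 2 ≤ B₂) (k : ℝ) :
    IntervalIntegrable (fun t ↦ triadField K (f t) k) volume a b := by
  have meas : Measurable fun t ↦ triadField K (f t) k :=
    (hK.measurable_triadField hf).comp (measurable_id.prodMk measurable_const)
  refine (intervalIntegrable_const (c := C * √|k| * B₂)).mono_fun' meas.aestronglyMeasurable ?_
  filter_upwards [ae_restrict_mem measurableSet_uIoc] with t ht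
  have ht' := uIoc_subset_uIcc ht
  exact (hK.norm_triadField_le (hf₂ t ht') k).trans
    (mul_le_mul_of_nonneg_left (hB₂ t ht') (mul_nonneg hK.nonneg (Real.sqrt_nonneg _)))

lemma integrable_inner_triadField_prod (hK : IsTriadKernel K C)
    (hf : Measurable (Function.uncurry f))
    (hf₁ : ∀ t ∈ uIcc a b, Integrable (halfDerivAmplitude (f t)))
    (hB₁ : ∀ t ∈ uIcc a b, ∫ k, halfDerivAmplitude (f t) k ≤ B₁)
    (hf₂ : ∀ t ∈ uIcc a b, MemLp (halfDerivAmplitude (f t)) 2)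
    (hB₂ : ∀ t ∈ uIcc a b, ∫ k, halfDerivAmplitude (f t) k ^ 2 ≤ B₂) :
    Integrable (fun p : ℝ × ℝ ↦ ⟪f p.1 p.2, triadField K (f p.1) p.2⟫)
      ((volume.restrict (uIoc a b)).prod volume) := by
  have meas : Measurable fun p : ℝ × ℝ ↦ ⟪f p.1 p.2, triadField K (f p.1) p.2⟫ :=
    hf.inner (hK.measurable_triadField hf)
  have dominating (t : ℝ) (ht : t ∈ uIcc a b) := (hf₁ t ht).const_mul
    (C * ∫ l, halfDerivAmplitude (f t) l ^ 2)
  have section_int (t : ℝ) (ht : t ∈ uIcc a b) :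
      Integrable fun k ↦ ⟪f t k, triadField K (f t) k⟫ :=
    (dominating t ht).mono' (meas.comp measurable_prodMk_left).aestronglyMeasurable
      (.of_forall (hK.norm_inner_triadField_le (hf₂ t ht)))
  have bound (t : ℝ) (ht : t ∈ uIcc a b) :
      ∫ k, ‖⟪f t k, triadField K (f t) k⟫‖ ≤ C * B₂ * B₁ := by
    calc ∫ k, ‖⟪f t k, triadField K (f t) k⟫‖
        ≤ ∫ k, C * (∫ l, halfDerivAmplitude (f t) l ^ 2) * halfDerivAmplitude (f t) k :=
          integral_mono (section_int t ht).norm (dominating t ht)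
            (hK.norm_inner_triadField_le (hf₂ t ht))
      _ = C * (∫ l, halfDerivAmplitude (f t) l ^ 2) * ∫ k, halfDerivAmplitude (f t) k :=
          integral_const_mul _ _
      _ ≤ C * B₂ * B₁ := by
          have hC := hK.nonneg
          have h₁ : 0 ≤ ∫ k, halfDerivAmplitude (f t) k :=
            integral_nonneg (halfDerivAmplitude_nonneg (f t))
          have h₂ : 0 ≤ B₂ := (integral_nonneg fun _ ↦ sq_nonneg _).trans (hB₂ t ht)
          gcongr
          exacts [hB₂ t ht, hB₁ t ht]
  have mem_uIcc : ∀ᵐ t ∂volume.restrict (uIoc a b), t ∈ uIcc a b :=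
    (ae_restrict_mem measurableSet_uIoc).mono fun t ht ↦ uIoc_subset_uIcc ht
  exact integrable_prod_of_integral_norm_le meas.aestronglyMeasurable
    (mem_uIcc.mono section_int) intervalIntegrable_const.def' (mem_uIcc.mono bound)

theorem integral_norm_sq_eq (hK : IsTriadKernel K C) (hf : Measurable (Function.uncurry f))
    (hreal : ∀ t ∈ uIcc a b, ∀ᵐ k, f t (-k) = conj (f t k))
    (hf₁ : ∀ t ∈ uIcc a b, Integrable (halfDerivAmplitude (f t)))
    (hB₁ : ∀ t ∈ uIcc a b, ∫ k, halfDerivAmplitude (f t) k ≤ B₁)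
    (hf₂ : ∀ t ∈ uIcc a b, MemLp (halfDerivAmplitude (f t)) 2)
    (hB₂ : ∀ t ∈ uIcc a b, ∫ k, halfDerivAmplitude (f t) k ^ 2 ≤ B₂)
    (hfa : Integrable fun k ↦ ‖f a k‖ ^ 2) (hfb : Integrable fun k ↦ ‖f b k‖ ^ 2)
    (hduh : ∀ᵐ k, ∀ t ∈ uIcc a b, f t k = f a k + ∫ r in a..t, triadField K (f r) k) :
    ∫ k, ‖f b k‖ ^ 2 = ∫ k, ‖f a k‖ ^ 2 := by
  have field_int (k : ℝ) : IntervalIntegrable (fun t ↦ triadField K (f t) k) volume a b :=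
    hK.intervalIntegrable_triadField hf hf₂ hB₂ k
  have energy := integral_norm_sq_sub_integral_norm_sq hduh (.of_forall field_int) hfa hfb
    (hK.integrable_inner_triadField_prod hf hf₁ hB₁ hf₂ hB₂)
  have pairing_zero : ∀ t ∈ uIcc a b, ∫ k, ⟪f t k, triadField K (f t) k⟫ = 0 := fun t ht ↦
    hK.integral_inner_triadField_eq_zero hf.of_uncurry_left (hreal t ht) (hf₁ t ht) (hf₂ t ht)
  rwa [intervalIntegral.integral_congr pairing_zero, intervalIntegral.integral_zero, mul_zero,
    sub_eq_zero] at energy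

end Evolution

end IsTriadKernel

end Triads

section SobolevWeight

variable {u : ℝ → ℂ} {p q : ℝ}

lemma abs_rpow_mul_norm_sq_le (u : ℝ → ℂ) (hp : 0 ≤ p) (hpq : p ≤ q) (k : ℝ) :
    |k| ^ p * ‖u k‖ ^ 2 ≤ (1 + |k| ^ q) * ‖u k‖ ^ 2 :=
  mul_le_mul_of_nonneg_right (rpow_le_one_add_rpow (abs_nonneg k) hp hpq) (sq_nonneg _)

lemma integrable_abs_rpow_mul_norm_sq (hu : Measurable u)
    (hint : Integrable fun k ↦ (1 + |k| ^ q) * ‖u k‖ ^ 2) (hp : 0 ≤ p) (hpq : p ≤ q) :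
    Integrable fun k ↦ |k| ^ p * ‖u k‖ ^ 2 := by
  refine hint.mono' (Measurable.aestronglyMeasurable (by fun_prop)) (.of_forall fun k ↦ ?_)
  rw [Real.norm_of_nonneg (by positivity)]
  exact abs_rpow_mul_norm_sq_le u hp hpq k

lemma integrable_norm_sq_of_weighted (hu : Measurable u)
    (hint : Integrable fun k ↦ (1 + |k| ^ q) * ‖u k‖ ^ 2) (hq : 0 ≤ q) :
    Integrable fun k ↦ ‖u k‖ ^ 2 := by
  simpa only [Real.rpow_zero, one_mul] using integrable_abs_rpow_mul_norm_sq hu hint le_rfl hq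

lemma memLp_two_halfDerivAmplitude (hu : Measurable u)
    (hint : Integrable fun k ↦ (1 + |k| ^ q) * ‖u k‖ ^ 2) (hq : 1 ≤ q) :
    MemLp (halfDerivAmplitude u) 2 := by
  rw [memLp_two_iff_integrable_sq (measurable_halfDerivAmplitude hu).aestronglyMeasurable]
  simpa only [halfDerivAmplitude_sq, Real.rpow_one] using
    integrable_abs_rpow_mul_norm_sq hu hint zero_le_one hq

lemma integral_halfDerivAmplitude_sq_le (hu : Measurable u)
    (hint : Integrable fun k ↦ (1 + |k| ^ q) * ‖u k‖ ^ 2) (hq : 1 ≤ q) :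
    ∫ k, halfDerivAmplitude u k ^ 2 ≤ ∫ k, (1 + |k| ^ q) * ‖u k‖ ^ 2 :=
  integral_mono (memLp_two_halfDerivAmplitude hu hint hq).integrable_sq hint fun k ↦ by
    simpa only [halfDerivAmplitude_sq, Real.rpow_one] using
      abs_rpow_mul_norm_sq_le u zero_le_one hq k

lemma halfDerivAmplitude_le (u : ℝ → ℂ) (q k : ℝ) :
    halfDerivAmplitude u k ≤ (|k| / (1 + |k| ^ q) + (1 + |k| ^ q) * ‖u k‖ ^ 2) / 2 := by
  have weight_pos : 0 < 1 + |k| ^ q := by positivity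
  have am_gm := two_mul_le_add_sq (√(|k| / (1 + |k| ^ q))) (√(1 + |k| ^ q) * ‖u k‖)
  have amplitude_eq : √(|k| / (1 + |k| ^ q)) * (√(1 + |k| ^ q) * ‖u k‖)
      = halfDerivAmplitude u k := by
    rw [← mul_assoc, ← Real.sqrt_mul (by positivity), div_mul_cancel₀ _ weight_pos.ne',
      halfDerivAmplitude]
  rw [Real.sq_sqrt (by positivity), mul_pow, Real.sq_sqrt weight_pos.le, mul_assoc,
    amplitude_eq] at am_gm
  linarith

lemma integrable_halfDerivAmplitude (hu : Measurable u)
    (hint : Integrable fun k ↦ (1 + |k| ^ q) * ‖u k‖ ^ 2) (hq : 2 < q) :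
    Integrable (halfDerivAmplitude u) := by
  refine (((integrable_abs_div_one_add_abs_rpow hq).add hint).div_const 2).mono'
    (measurable_halfDerivAmplitude hu).aestronglyMeasurable (.of_forall fun k ↦ ?_)
  rw [Real.norm_of_nonneg (halfDerivAmplitude_nonneg u k)]
  exact halfDerivAmplitude_le u q k

lemma integral_halfDerivAmplitude_le (hu : Measurable u)
    (hint : Integrable fun k ↦ (1 + |k| ^ q) * ‖u k‖ ^ 2) (hq : 2 < q) :
    ∫ k, halfDerivAmplitude u k
      ≤ ((∫ k, |k| / (1 + |k| ^ q)) + ∫ k, (1 + |k| ^ q) * ‖u k‖ ^ 2) / 2 := by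
  have weight_int := integrable_abs_div_one_add_abs_rpow hq
  rw [← integral_add weight_int hint, ← integral_div]
  exact integral_mono (integrable_halfDerivAmplitude hu hint hq)
    ((weight_int.add hint).div_const 2) (halfDerivAmplitude_le u q)

end SobolevWeight

section SurfaceWaveKernel

lemma Sker_eq (k l : ℝ) :
    Sker k l = 2 * √(|k| * |l| * |k + l|) / (|k + l| + |k| + |l|) := by
  simp only [Sker, Lam, abs_mul]
  split_ifs with hne hzero
  · exact absurd (by simp [(Prod.mk.inj hzero).1]) hne
  · have pos : 0 < |k| * |l| * |k + l| := by simpa only [abs_mul] using abs_pos.2 hne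
    rw [div_right_comm]
    congr 1
    rw [div_eq_iff (Real.sqrt_pos.2 pos).ne', mul_assoc 2 √_, Real.mul_self_sqrt pos.le]
    ring
  · have zero : |k| * |l| * |k + l| = 0 := by
      rw [← abs_mul, ← abs_mul, not_not.1 hne, abs_zero]
    rw [zero, Real.sqrt_zero, mul_zero, zero_div]

lemma isTriadKernel_Sker : IsTriadKernel Sker 2 where
  measurable := by
    simp only [Function.uncurry_def, Sker_eq]
    fun_prop
  symm k l := by
    rw [Sker_eq, Sker_eq, add_comm l k, mul_comm |l|, add_right_comm]
  resonant k l := by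
    rw [Sker_eq, Sker_eq, neg_add_cancel_left, abs_neg, mul_right_comm]
    congr 1
    ring
  bound k l := by
    have hle : |k + l| ≤ |k + l| + |k| + |l| := by linarith [abs_nonneg k, abs_nonneg l]
    have nonneg : 0 ≤ Sker k l := by rw [Sker_eq]; positivity
    rw [abs_of_nonneg nonneg, Sker_eq, ← mul_div_assoc, mul_comm |k + l|]
    exact div_le_of_le_mul₀ (by positivity) (by positivity)
      (mul_le_mul_of_nonneg_left hle (by positivity))

end SurfaceWaveKernel

theorem L2_conservation_general {K : ℝ → ℝ → ℝ} {C : ℝ} (hK : IsTriadKernel K C)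
    {s : ℝ} (hs : 1 < s) {I : Set ℝ} (hI : I.OrdConnected) (h0 : (0 : ℝ) ∈ I) {f : ℝ → ℝ → ℂ}
    (hmeas : Measurable (Function.uncurry f))
    (hreal : ∀ τ ∈ I, ∀ᵐ k : ℝ, f τ (-k) = (starRingEnd ℂ) (f τ k))
    (hintg : ∀ τ ∈ I, Integrable fun k : ℝ ↦ (1 + |k| ^ (2 * s)) * ‖f τ k‖ ^ 2)
    (hbdd : ∃ M : ℝ, ∀ τ ∈ I, ∫ k : ℝ, (1 + |k| ^ (2 * s)) * ‖f τ k‖ ^ 2 ≤ M)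
    (hduh : ∀ᵐ k : ℝ, ∀ τ ∈ I,
      f τ k = f 0 k - Complex.I * k * ∫ σ in (0 : ℝ)..τ, triadConvolution K (f σ) k) :
    ∀ τ ∈ I, ∫ k : ℝ, ‖f τ k‖ ^ 2 = ∫ k : ℝ, ‖f 0 k‖ ^ 2 := by
  intro τ hτ
  obtain ⟨M, hM⟩ := hbdd
  have mem_I : ∀ t ∈ Set.uIcc 0 τ, t ∈ I := hI.uIcc_subset h0 hτ
  have meas (t : ℝ) : Measurable (f t) := hmeas.of_uncurry_left
  have norm_sq_int (t : ℝ) (ht : t ∈ I) : Integrable fun k ↦ ‖f t k‖ ^ 2 :=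
    integrable_norm_sq_of_weighted (meas t) (hintg t ht) (by linarith)
  have amp_int (t : ℝ) (ht : t ∈ I) : Integrable (halfDerivAmplitude (f t)) :=
    integrable_halfDerivAmplitude (meas t) (hintg t ht) (by linarith)
  have amp_bound (t : ℝ) (ht : t ∈ I) : ∫ k, halfDerivAmplitude (f t) k
      ≤ ((∫ k, |k| / (1 + |k| ^ (2 * s))) + M) / 2 :=
    (integral_halfDerivAmplitude_le (meas t) (hintg t ht) (by linarith)).trans
      (by gcongr; exact hM t ht)
  have amp_memLp (t : ℝ) (ht : t ∈ I) : MemLp (halfDerivAmplitude (f t)) 2 :=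
    memLp_two_halfDerivAmplitude (meas t) (hintg t ht) (by linarith)
  have amp_sq_bound (t : ℝ) (ht : t ∈ I) : ∫ k, halfDerivAmplitude (f t) k ^ 2 ≤ M :=
    (integral_halfDerivAmplitude_sq_le (meas t) (hintg t ht) (by linarith)).trans (hM t ht)
  have duhamel : ∀ᵐ k : ℝ, ∀ t ∈ Set.uIcc 0 τ,
      f t k = f 0 k + ∫ σ in (0 : ℝ)..t, triadField K (f σ) k := by
    filter_upwards [hduh] with k hk t ht
    simp only [triadField, intervalIntegral.integral_neg, intervalIntegral.integral_const_mul,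
      ← sub_eq_add_neg]
    exact hk t (mem_I t ht)
  exact hK.integral_norm_sq_eq hmeas (fun t ht ↦ hreal t (mem_I t ht))
    (fun t ht ↦ amp_int t (mem_I t ht)) (fun t ht ↦ amp_bound t (mem_I t ht))
    (fun t ht ↦ amp_memLp t (mem_I t ht)) (fun t ht ↦ amp_sq_bound t (mem_I t ht))
    (norm_sq_int 0 h0) (norm_sq_int τ hτ) duhamel

/-- Conservation of the `L²` norm for solutions (on the Fourier side) of the
noncanonical surface-wave amplitude equation, given in Duhamel form. -/
theorem L2_conservation (s : ℝ) (hs : 2 < s) (a b : ℝ) (ha : a < 0) (hb : 0 < b)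
    (f : ℝ → ℝ → ℂ)
    (hmeas : Measurable (Function.uncurry f))
    (hreal : ∀ τ ∈ Set.Ioo a b, ∀ᵐ k : ℝ, f τ (-k) = (starRingEnd ℂ) (f τ k))
    (hintg : ∀ τ ∈ Set.Ioo a b,
      Integrable (fun k : ℝ => (1 + |k| ^ (2 * s)) * ‖f τ k‖ ^ 2))
    (hbdd : ∃ M : ℝ, ∀ τ ∈ Set.Ioo a b,
      (∫ k : ℝ, (1 + |k| ^ (2 * s)) * ‖f τ k‖ ^ 2) ≤ M)
    (hcont : ∀ τ₀ ∈ Set.Ioo a b, Filter.Tendsto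
      (fun τ : ℝ => ∫ k : ℝ, (1 + |k| ^ (2 * s)) * ‖f τ k - f τ₀ k‖ ^ 2)
      (nhdsWithin τ₀ (Set.Ioo a b)) (nhds 0))
    (hduh : ∀ᵐ k : ℝ, ∀ τ ∈ Set.Ioo a b,
      f τ k = f 0 k - Complex.I * ((k : ℝ) : ℂ) *
        ∫ σ in (0 : ℝ)..τ, ∫ l : ℝ,
          ((Sker (k - l) l : ℝ) : ℂ) * f σ (k - l) * f σ l) :
    ∀ τ ∈ Set.Ioo a b, (∫ k : ℝ, ‖f τ k‖ ^ 2) = ∫ k : ℝ, ‖f 0 k‖ ^ 2 :=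
  L2_conservation_general isTriadKernel_Sker (by linarith) Set.ordConnected_Ioo ⟨ha, hb⟩ hmeas hreal
    hintg hbdd hduh
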